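/- arXiv:2508.11533 — 2 statements merged into one kernel-verified Lean document; each statement's English description precedes it below -/
import Mathlib

section
/- Petersen's lemma (strict version): Let 𝐂 ∈ ℝ^{n×n} be symmetric, 𝐌 ∈ ℝ^{n×p}, 𝐃̄ ∈ ℝ^{q×q} symmetric positive semidefinite, and 𝐍 ∈ ℝ^{n×q}. Then 𝐂 + 𝐌𝐃𝐍ᵀ + 𝐍𝐃ᵀ𝐌ᵀ ≺ 0 holds for every 𝐃 ∈ ℝ^{p×q} with 𝐃ᵀ𝐃 ⪯ 𝐃̄ if and only if there exists a scalar μ > 0 such that 𝐂 + μ𝐌𝐌ᵀ + μ⁻¹𝐍𝐃̄𝐍ᵀ ≺ 0. -/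
open Matrix

/-!
Completing the square gives `M D Nᴴ + N Dᴴ Mᴴ ⪯ μ M Mᴴ + μ⁻¹ N S Nᴴ` whenever `Dᴴ D ⪯ S` and
`μ > 0`, which is one direction.

For the other, factor `S = Bᴴ B`; then `D = F B` is admissible for every contraction `F`. At a fixed
`x ≠ 0`, a rank-one contraction aligns `B Nᴴ x` with `Mᴴ x`, so the quadratic forms `a x = ‖Mᴴ x‖²`,
`b x = ‖B Nᴴ x‖²` and `c x = -re (xᴴ C x)` satisfy `4 a b < c²` away from `0`. Thus each `x ≠ 0` has
its own `μ` with `μ a x + μ⁻¹ b x < c x`, and it remains to find one that serves all `x`.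

Suppose that for every `μ > 0` the form `Q μ = μ a + μ⁻¹ b - c` is nonnegative at some `x ≠ 0`, and
let `L μ = μ a - μ⁻¹ b`, which is `μ ∂Q/∂μ`. The `μ` for which such an `x` exists with `L μ x ≤ 0`,
respectively with `L μ x ≥ 0`, form two nonempty closed sets covering the connected set `(0, ∞)`, so
some `μ` belongs to both. Along the segment joining the two corresponding vectors there is a nonzero
`z` with `Q μ z ≥ 0` and `L μ z = 0`, contradicting `4 a b < c²`.
-/

section QuadraticForm

theorem quadraticForm_smul_add_smul {R E : Type*} [CommRing R] [AddCommGroup E] [Module R E]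
    (Q : QuadraticForm R E) (s t : R) (x y : E) :
    Q (s • x + t • y) = s ^ 2 * Q x + t ^ 2 * Q y + s * t * QuadraticMap.polar Q x y := by
  simp only [QuadraticMap.map_add Q, QuadraticMap.map_smul, QuadraticMap.polar_smul_left,
    QuadraticMap.polar_smul_right, smul_eq_mul]
  ring

theorem exists_mem_Icc_quadraticForm_segment_eq_zero {E : Type*} [AddCommGroup E] [Module ℝ E]
    (L : QuadraticForm ℝ E) {x y : E} (hx : L x ≤ 0) (hy : 0 ≤ L y) :
    ∃ t ∈ Set.Icc (0 : ℝ) 1, L ((1 - t) • x + t • y) = 0 := by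
  refine intermediate_value_Icc zero_le_one (f := fun t : ℝ ↦ L ((1 - t) • x + t • y)) ?_ ?_
  · simp only [quadraticForm_smul_add_smul]
    fun_prop
  · simpa using ⟨hx, hy⟩

theorem exists_ne_zero_nonneg_and_eq_zero {E : Type*} [AddCommGroup E] [Module ℝ E]
    (Q L : QuadraticForm ℝ E) {x y : E} (hx : x ≠ 0) (hy : y ≠ 0) (hQx : 0 ≤ Q x) (hQy : 0 ≤ Q y)
    (hLx : L x ≤ 0) (hLy : 0 ≤ L y) : ∃ z, z ≠ 0 ∧ 0 ≤ Q z ∧ L z = 0 := by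
  rcases hLx.eq_or_lt with hLx₀ | hLx
  · exact ⟨x, hx, hQx, hLx₀⟩
  wlog hpolar : 0 ≤ QuadraticMap.polar Q x y generalizing y
  · exact this (y := -y) (neg_ne_zero.2 hy) (by simpa using hQy) (by simpa using hLy)
      (by simpa using (not_le.1 hpolar).le)
  obtain ⟨t, ⟨ht₀, ht₁⟩, hLt⟩ := exists_mem_Icc_quadraticForm_segment_eq_zero L hLx.le hLy
  refine ⟨(1 - t) • x + t • y, fun hz ↦ ?_, ?_, hLt⟩
  · have hL : (1 - t) ^ 2 * L x = t ^ 2 * L y := by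
      simpa [QuadraticMap.map_smul, ← sq] using congrArg L (eq_neg_of_add_eq_zero_left hz)
    have ht : t = 1 := by
      by_contra ht
      have : 0 < (1 - t) ^ 2 := by have := sub_ne_zero.2 (Ne.symm ht); positivity
      nlinarith [mul_nonneg (sq_nonneg t) hLy]
    exact hy (by simpa [ht] using hz)
  · rw [quadraticForm_smul_add_smul]
    have := sub_nonneg.2 ht₁
    positivity

variable {E : Type*} [NormedAddCommGroup E] [NormedSpace ℝ E]

theorem exists_ne_zero_nonneg_iff_exists_mem_sphere {Q R : QuadraticForm ℝ E} :
    (∃ x, x ≠ 0 ∧ 0 ≤ Q x ∧ 0 ≤ R x) ↔ ∃ x ∈ Metric.sphere (0 : E) 1, 0 ≤ Q x ∧ 0 ≤ R x := by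
  refine ⟨fun ⟨x, hx, hQ, hR⟩ ↦ ⟨‖x‖⁻¹ • x, ?_, ?_, ?_⟩,
    fun ⟨x, hx, h⟩ ↦ ⟨x, ne_zero_of_mem_unit_sphere ⟨x, hx⟩, h⟩⟩
  · simpa using norm_smul_inv_norm (𝕜 := ℝ) hx
  all_goals
    rw [QuadraticMap.map_smul, smul_eq_mul]
    positivity

theorem isClosed_setOf_exists_ne_zero_nonneg [ProperSpace E] {T : Type*} [TopologicalSpace T]
    {Q R : T → QuadraticForm ℝ E} (hQ : Continuous fun z : T × E ↦ Q z.1 z.2)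
    (hR : Continuous fun z : T × E ↦ R z.1 z.2) :
    IsClosed {t | ∃ x, x ≠ 0 ∧ 0 ≤ Q t x ∧ 0 ≤ R t x} := by
  have hval : Continuous fun z : T × Metric.sphere (0 : E) 1 ↦ (z.1, (z.2 : E)) := by fun_prop
  have hclosed : IsClosed {z : T × Metric.sphere (0 : E) 1 | 0 ≤ Q z.1 z.2 ∧ 0 ≤ R z.1 z.2} :=
    (isClosed_le continuous_const (hQ.comp hval)).inter
      (isClosed_le continuous_const (hR.comp hval))
  convert isClosedMap_fst_of_compactSpace _ hclosed using 1
  ext t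
  simp [exists_ne_zero_nonneg_iff_exists_mem_sphere, and_left_comm]

theorem exists_forall_ne_zero_neg_of_preconnectedSpace [ProperSpace E] {T : Type*}
    [TopologicalSpace T] [PreconnectedSpace T] {Q L : T → QuadraticForm ℝ E}
    (hQ : Continuous fun z : T × E ↦ Q z.1 z.2) (hL : Continuous fun z : T × E ↦ L z.1 z.2)
    (hcrit : ∀ t x, x ≠ 0 → L t x = 0 → Q t x < 0)
    (hnonpos : ∃ t, ∀ x, 0 ≤ Q t x → L t x ≤ 0) (hnonneg : ∃ t, ∀ x, 0 ≤ Q t x → 0 ≤ L t x) :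
    ∃ t, ∀ x, x ≠ 0 → Q t x < 0 := by
  by_contra! hbad
  let decreasing : Set T := {t | ∃ x, x ≠ 0 ∧ 0 ≤ Q t x ∧ 0 ≤ (-L t) x}
  let increasing : Set T := {t | ∃ x, x ≠ 0 ∧ 0 ≤ Q t x ∧ 0 ≤ L t x}
  have hcover : Set.univ ⊆ decreasing ∪ increasing := by
    intro t _
    obtain ⟨x, hx, hQx⟩ := hbad t
    rcases le_total (L t x) 0 with hLx | hLx
    · exact Or.inl ⟨x, hx, hQx, neg_nonneg.2 hLx⟩
    · exact Or.inr ⟨x, hx, hQx, hLx⟩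
  have hdecreasing : (Set.univ ∩ decreasing).Nonempty := by
    obtain ⟨t, ht⟩ := hnonpos
    obtain ⟨x, hx, hQx⟩ := hbad t
    exact ⟨t, trivial, x, hx, hQx, neg_nonneg.2 (ht x hQx)⟩
  have hincreasing : (Set.univ ∩ increasing).Nonempty := by
    obtain ⟨t, ht⟩ := hnonneg
    obtain ⟨x, hx, hQx⟩ := hbad t
    exact ⟨t, trivial, x, hx, hQx, ht x hQx⟩
  obtain ⟨t, -, ⟨x, hx, hQx, hLx⟩, ⟨y, hy, hQy, hLy⟩⟩ :=
    isPreconnected_closed_iff.1 isPreconnected_univ decreasing increasing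
      (isClosed_setOf_exists_ne_zero_nonneg hQ hL.neg)
      (isClosed_setOf_exists_ne_zero_nonneg hQ hL) hcover hdecreasing hincreasing
  obtain ⟨z, hz, hQz, hLz⟩ :=
    exists_ne_zero_nonneg_and_eq_zero (Q t) (L t) hx hy hQx hQy (neg_nonneg.1 hLx) hLy
  exact (hcrit t z hz hLz).not_ge hQz

variable [FiniteDimensional ℝ E]

theorem continuous_quadraticForm (Q : QuadraticForm ℝ E) : Continuous Q := by
  have hQ : ⇑Q = fun x ↦ (QuadraticMap.associated Q).toContinuousBilinearMap x x := by
    ext x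
    exact (QuadraticMap.associated_eq_self_apply ℝ Q x).symm
  rw [hQ]
  fun_prop

theorem exists_pos_forall_mul_quadraticForm_le (a : QuadraticForm ℝ E) {c : QuadraticForm ℝ E}
    (hc : c.PosDef) : ∃ ε : ℝ, 0 < ε ∧ ∀ x, ε * a x ≤ c x := by
  have hratio : ContinuousOn (fun x ↦ a x / c x) (Metric.sphere 0 1) :=
    (continuous_quadraticForm a).continuousOn.div (continuous_quadraticForm c).continuousOn
      fun x hx ↦ (hc x (ne_zero_of_mem_unit_sphere ⟨x, hx⟩)).ne'
  have := FiniteDimensional.proper_real E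
  obtain ⟨K, hK⟩ := (isCompact_sphere (0 : E) 1).bddAbove_image hratio
  have hK' : 0 < max K 1 := by positivity
  refine ⟨(max K 1)⁻¹, inv_pos.2 hK', fun x ↦ ?_⟩
  rcases eq_or_ne x 0 with rfl | hx
  · simp
  have hle : a x / c x ≤ K := by
    have hmem : ‖x‖⁻¹ • x ∈ Metric.sphere (0 : E) 1 := by
      simpa using norm_smul_inv_norm (𝕜 := ℝ) hx
    have hx' : ‖x‖⁻¹ * ‖x‖⁻¹ ≠ 0 := by simpa using hx
    simpa only [QuadraticMap.map_smul, smul_eq_mul, mul_div_mul_left _ _ hx'] using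
      hK (Set.mem_image_of_mem _ hmem)
  rw [inv_mul_le_iff₀ hK', ← div_le_iff₀ (hc x hx)]
  exact hle.trans (le_max_left K 1)

theorem mul_add_inv_mul_lt_of_eq {μ α β γ : ℝ} (hμ : μ ≠ 0) (hγ : 0 < γ)
    (h : 4 * α * β < γ ^ 2) (heq : μ * α = μ⁻¹ * β) : μ * α + μ⁻¹ * β < γ := by
  have hsq : (2 * (μ * α)) ^ 2 = 4 * α * β := by
    calc (2 * (μ * α)) ^ 2 = 4 * (μ * α) * (μ * α) := by ring
      _ = 4 * (μ * α) * (μ⁻¹ * β) := by rw [← heq]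
      _ = 4 * α * β := by field_simp
  have := lt_of_pow_lt_pow_left₀ 2 hγ.le (hsq.trans_lt h)
  linarith

theorem exists_pos_posDef_sub_smul_add_inv_smul (a b : QuadraticForm ℝ E) {c : QuadraticForm ℝ E}
    (hc : c.PosDef) (h : ∀ x, x ≠ 0 → 4 * a x * b x < c x ^ 2) :
    ∃ μ : ℝ, 0 < μ ∧ (c - (μ • a + μ⁻¹ • b)).PosDef := by
  let Q (μ : Set.Ioi (0 : ℝ)) : QuadraticForm ℝ E := μ.1 • a + μ.1⁻¹ • b - c
  let L (μ : Set.Ioi (0 : ℝ)) : QuadraticForm ℝ E := μ.1 • a - μ.1⁻¹ • b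
  have hQ_apply (μ x) : Q μ x = μ.1 * a x + μ.1⁻¹ * b x - c x := rfl
  have hL_apply (μ x) : L μ x = μ.1 * a x - μ.1⁻¹ * b x := rfl
  have hne (μ : Set.Ioi (0 : ℝ)) : μ.1 ≠ 0 := (Set.mem_Ioi.1 μ.2).ne'
  have hcont_a := continuous_quadraticForm a
  have hcont_b := continuous_quadraticForm b
  have hcont_c := continuous_quadraticForm c
  have := FiniteDimensional.proper_real E
  have : PreconnectedSpace (Set.Ioi (0 : ℝ)) := Subtype.preconnectedSpace isPreconnected_Ioi
  obtain ⟨ε, hε, hεa⟩ := exists_pos_forall_mul_quadraticForm_le ((2 : ℝ) • a) hc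
  obtain ⟨δ, hδ, hδb⟩ := exists_pos_forall_mul_quadraticForm_le ((2 : ℝ) • b) hc
  simp only [_root_.smul_apply, smul_eq_mul] at hεa hδb
  obtain ⟨μ, hμ⟩ : ∃ μ, ∀ x, x ≠ 0 → Q μ x < 0 := by
    refine exists_forall_ne_zero_neg_of_preconnectedSpace (L := L) ?_ ?_ (fun μ x hx hLx ↦ ?_)
      ⟨⟨ε, hε⟩, fun x hQx ↦ ?_⟩ ⟨⟨δ⁻¹, inv_pos.2 hδ⟩, fun x hQx ↦ ?_⟩
    · simp only [hQ_apply]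
      fun_prop (disch := exact fun z ↦ hne z.1)
    · simp only [hL_apply]
      fun_prop (disch := exact fun z ↦ hne z.1)
    · exact sub_neg.2 <| mul_add_inv_mul_lt_of_eq (hne μ) (hc x hx) (h x hx) (sub_eq_zero.1 hLx)
    · rw [hQ_apply] at hQx
      rw [hL_apply]
      linarith [hεa x]
    · rw [hQ_apply, inv_inv] at hQx
      rw [hL_apply, inv_inv]
      linarith [hδb x]
  refine ⟨μ, μ.2, fun x hx ↦ ?_⟩
  exact sub_pos.2 (sub_neg.1 (hμ x hx))

end QuadraticForm

section Matrix

open scoped ComplexOrder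

variable {𝕜 n p q : Type*} [RCLike 𝕜] [Fintype p] [Fintype q]

section Fintype

variable [Fintype n]

/-- The real quadratic form `x ↦ re (xᴴ A x)` of a matrix `A`, as a linear function of `A`. It
decides whether a Hermitian `A` is positive definite. For complex `A` it lives on `n → 𝕜` regarded
as a real vector space. -/
noncomputable def reQuadraticForm : Matrix n n 𝕜 →ₗ[ℝ] QuadraticForm ℝ (n → 𝕜) where
  toFun A := LinearMap.BilinMap.toQuadraticMap <|
    LinearMap.mk₂ ℝ (fun x y ↦ RCLike.re (star x ⬝ᵥ A *ᵥ y))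
      (by simp [add_dotProduct]) (by simp [RCLike.smul_re]) (by simp [mulVec_add])
      (by simp [mulVec_smul, RCLike.smul_re])
  map_add' A B := by
    ext x
    simp [add_mulVec]
  map_smul' r A := by
    ext x
    simp [smul_mulVec, RCLike.smul_re]

theorem reQuadraticForm_apply (A : Matrix n n 𝕜) (x : n → 𝕜) :
    reQuadraticForm A x = RCLike.re (star x ⬝ᵥ A *ᵥ x) := rfl

theorem posDef_iff_reQuadraticForm_posDef {A : Matrix n n 𝕜} (hA : A.IsHermitian) :
    A.PosDef ↔ (reQuadraticForm A).PosDef := by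
  refine ⟨fun h x hx ↦ h.re_dotProduct_pos hx, fun h ↦ .of_dotProduct_mulVec_pos hA fun x hx ↦ ?_⟩
  exact RCLike.pos_iff.2 ⟨h x hx, hA.im_star_dotProduct_mulVec_self x⟩

theorem reQuadraticForm_conjTranspose (A : Matrix n n 𝕜) :
    reQuadraticForm Aᴴ = reQuadraticForm A := by
  ext x
  rw [reQuadraticForm_apply, reQuadraticForm_apply, ← RCLike.conj_re, ← RCLike.star_def,
    star_dotProduct, star_mulVec, conjTranspose_conjTranspose, star_star, dotProduct_mulVec]

theorem reQuadraticForm_mul_mul_conjTranspose (M : Matrix n p 𝕜) (F : Matrix p q 𝕜)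
    (N : Matrix n q 𝕜) (x : n → 𝕜) :
    reQuadraticForm (M * F * Nᴴ) x = RCLike.re (star (Mᴴ *ᵥ x) ⬝ᵥ F *ᵥ (Nᴴ *ᵥ x)) := by
  rw [reQuadraticForm_apply, ← mulVec_mulVec, ← mulVec_mulVec, dotProduct_mulVec, star_mulVec,
    conjTranspose_conjTranspose]

theorem star_dotProduct_self_eq_norm_sq (x : n → 𝕜) :
    star x ⬝ᵥ x = ((‖WithLp.toLp 2 x‖ ^ 2 : ℝ) : 𝕜) := by
  rw [dotProduct_comm, RCLike.ofReal_pow]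
  exact inner_self_eq_norm_sq_to_K (𝕜 := 𝕜) (WithLp.toLp 2 x)

theorem norm_star_dotProduct_le (x y : n → 𝕜) :
    ‖star x ⬝ᵥ y‖ ≤ ‖WithLp.toLp 2 x‖ * ‖WithLp.toLp 2 y‖ := by
  rw [dotProduct_comm]
  exact norm_inner_le_norm (𝕜 := 𝕜) (WithLp.toLp 2 x) (WithLp.toLp 2 y)

theorem reQuadraticForm_mul_conjTranspose_self (M : Matrix n p 𝕜) (x : n → 𝕜) :
    reQuadraticForm (M * Mᴴ) x = ‖WithLp.toLp 2 (Mᴴ *ᵥ x)‖ ^ 2 := by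
  classical
  rw [← Matrix.mul_one M, reQuadraticForm_mul_mul_conjTranspose, Matrix.mul_one, one_mulVec,
    star_dotProduct_self_eq_norm_sq, RCLike.ofReal_re]

theorem posSemidef_one_sub_conjTranspose_mul_self [DecidableEq q] {F : Matrix p q 𝕜}
    (hF : ∀ x, ‖WithLp.toLp 2 (F *ᵥ x)‖ ≤ ‖WithLp.toLp 2 x‖) : (1 - Fᴴ * F).PosSemidef := by
  refine .of_dotProduct_mulVec_nonneg (isHermitian_one.sub (isHermitian_conjTranspose_mul_self F))
    fun x ↦ ?_
  have hform : star x ⬝ᵥ (1 - Fᴴ * F) *ᵥ x =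
      ((‖WithLp.toLp 2 x‖ ^ 2 - ‖WithLp.toLp 2 (F *ᵥ x)‖ ^ 2 : ℝ) : 𝕜) := by
    rw [RCLike.ofReal_sub, ← star_dotProduct_self_eq_norm_sq, ← star_dotProduct_self_eq_norm_sq,
      sub_mulVec, one_mulVec, dotProduct_sub, ← mulVec_mulVec, star_mulVec, dotProduct_mulVec _ Fᴴ]
  rw [hform, RCLike.ofReal_nonneg, sub_nonneg]
  gcongr
  exact hF x

theorem exists_posSemidef_one_sub_and_dotProduct_mulVec_eq [DecidableEq q]
    (u : p → 𝕜) (v : q → 𝕜) :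
    ∃ F : Matrix p q 𝕜, (1 - Fᴴ * F).PosSemidef ∧
      star u ⬝ᵥ F *ᵥ v = ((‖WithLp.toLp 2 u‖ * ‖WithLp.toLp 2 v‖ : ℝ) : 𝕜) := by
  set s : ℝ := ‖WithLp.toLp 2 u‖ * ‖WithLp.toLp 2 v‖ with hs
  have hmulVec (x : q → 𝕜) :
      (s⁻¹ • vecMulVec u (star v)) *ᵥ x = ((s⁻¹ : ℝ) * (star v ⬝ᵥ x) : 𝕜) • u := by
    ext i
    simp only [smul_mulVec, vecMulVec_mulVec, RCLike.real_smul_eq_coe_mul, Pi.smul_apply,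
      MulOpposite.smul_eq_mul_unop, MulOpposite.unop_op, smul_eq_mul]
    ring
  refine ⟨s⁻¹ • vecMulVec u (star v), posSemidef_one_sub_conjTranspose_mul_self fun x ↦ ?_, ?_⟩
  · calc ‖WithLp.toLp 2 ((s⁻¹ • vecMulVec u (star v)) *ᵥ x)‖
        = s⁻¹ * ‖star v ⬝ᵥ x‖ * ‖WithLp.toLp 2 u‖ := by
          rw [hmulVec, WithLp.toLp_smul, norm_smul, norm_mul, RCLike.norm_ofReal,
            abs_of_nonneg (by positivity)]
      _ ≤ s⁻¹ * (‖WithLp.toLp 2 v‖ * ‖WithLp.toLp 2 x‖) * ‖WithLp.toLp 2 u‖ := by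
          gcongr
          exact norm_star_dotProduct_le v x
      _ = s⁻¹ * s * ‖WithLp.toLp 2 x‖ := by rw [hs]; ring
      _ ≤ ‖WithLp.toLp 2 x‖ := mul_le_of_le_one_left (norm_nonneg _) inv_mul_le_one
  · rw [hmulVec, dotProduct_smul, smul_eq_mul, star_dotProduct_self_eq_norm_sq,
      star_dotProduct_self_eq_norm_sq, ← RCLike.ofReal_mul, ← RCLike.ofReal_mul]
    congr 1
    calc s⁻¹ * ‖WithLp.toLp 2 v‖ ^ 2 * ‖WithLp.toLp 2 u‖ ^ 2 = s⁻¹ * s * s := by rw [hs]; ring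
      _ = s := inv_mul_mul_self s

theorem four_mul_reQuadraticForm_mul_lt_sq_of_forall_contraction [DecidableEq q]
    {C : Matrix n n 𝕜} {M : Matrix n p 𝕜} {N : Matrix n q 𝕜}
    (h : ∀ F : Matrix p q 𝕜, (1 - Fᴴ * F).PosSemidef →
      (-(C + M * F * Nᴴ + N * Fᴴ * Mᴴ)).PosDef) {x : n → 𝕜} (hx : x ≠ 0) :
    4 * reQuadraticForm (M * Mᴴ) x * reQuadraticForm (N * Nᴴ) x < reQuadraticForm (-C) x ^ 2 := by
  obtain ⟨F, hF, hFeq⟩ := exists_posSemidef_one_sub_and_dotProduct_mulVec_eq (Mᴴ *ᵥ x) (Nᴴ *ᵥ x)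
  have hadj : N * Fᴴ * Mᴴ = (M * F * Nᴴ)ᴴ := by simp [Matrix.mul_assoc]
  have hpos : 0 < reQuadraticForm (-(C + M * F * Nᴴ + N * Fᴴ * Mᴴ)) x :=
    (h F hF).re_dotProduct_pos hx
  have hlt : 2 * (‖WithLp.toLp 2 (Mᴴ *ᵥ x)‖ * ‖WithLp.toLp 2 (Nᴴ *ᵥ x)‖) <
      reQuadraticForm (-C) x := by
    have hcross : reQuadraticForm (M * F * Nᴴ) x =
        ‖WithLp.toLp 2 (Mᴴ *ᵥ x)‖ * ‖WithLp.toLp 2 (Nᴴ *ᵥ x)‖ := by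
      rw [reQuadraticForm_mul_mul_conjTranspose, hFeq, RCLike.ofReal_re]
    simp only [hadj, map_neg, map_add, _root_.add_apply, _root_.neg_apply,
      reQuadraticForm_conjTranspose, hcross] at hpos ⊢
    linarith
  rw [reQuadraticForm_mul_conjTranspose_self, reQuadraticForm_mul_conjTranspose_self]
  calc 4 * ‖WithLp.toLp 2 (Mᴴ *ᵥ x)‖ ^ 2 * ‖WithLp.toLp 2 (Nᴴ *ᵥ x)‖ ^ 2
      = (2 * (‖WithLp.toLp 2 (Mᴴ *ᵥ x)‖ * ‖WithLp.toLp 2 (Nᴴ *ᵥ x)‖)) ^ 2 := by ring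
    _ < reQuadraticForm (-C) x ^ 2 := by gcongr

theorem exists_eq_conjTranspose_mul_self {S : Matrix q q 𝕜} (hS : S.PosSemidef) :
    ∃ B : Matrix q q 𝕜, S = Bᴴ * B := by
  classical
  open scoped MatrixOrder in
  exact CStarAlgebra.nonneg_iff_eq_star_mul_self.1 hS.nonneg

end Fintype

variable [Finite n]

theorem exists_posDef_of_forall_contraction [DecidableEq q] {C : Matrix n n 𝕜}
    {M : Matrix n p 𝕜} {N : Matrix n q 𝕜} (h : ∀ F : Matrix p q 𝕜, (1 - Fᴴ * F).PosSemidef →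
      (-(C + M * F * Nᴴ + N * Fᴴ * Mᴴ)).PosDef) :
    ∃ μ : ℝ, 0 < μ ∧ (-(C + μ • (M * Mᴴ) + μ⁻¹ • (N * Nᴴ))).PosDef := by
  cases nonempty_fintype n
  have hC : (-C).PosDef := by simpa using h 0 (by simpa using PosSemidef.one)
  obtain ⟨μ, hμ, hposDef⟩ := exists_pos_posDef_sub_smul_add_inv_smul
    (reQuadraticForm (M * Mᴴ)) (reQuadraticForm (N * Nᴴ))
    ((posDef_iff_reQuadraticForm_posDef hC.isHermitian).1 hC)
    fun x hx ↦ four_mul_reQuadraticForm_mul_lt_sq_of_forall_contraction h hx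
  have hM := (isHermitian_mul_conjTranspose_self M).smul (.all μ)
  have hN := (isHermitian_mul_conjTranspose_self N).smul (.all μ⁻¹)
  have hsub : -(C + μ • (M * Mᴴ) + μ⁻¹ • (N * Nᴴ)) =
      -C - (μ • (M * Mᴴ) + μ⁻¹ • (N * Nᴴ)) := by abel
  refine ⟨μ, hμ, ?_⟩
  rw [hsub, posDef_iff_reQuadraticForm_posDef (hC.isHermitian.sub (hM.add hN))]
  simpa only [map_sub, map_add, map_smul] using hposDef

theorem posSemidef_smul_add_inv_smul_sub {S : Matrix q q 𝕜} {D : Matrix p q 𝕜}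
    (hD : (S - Dᴴ * D).PosSemidef) (M : Matrix n p 𝕜) (N : Matrix n q 𝕜) {μ : ℝ} (hμ : 0 < μ) :
    (μ • (M * Mᴴ) + μ⁻¹ • (N * S * Nᴴ) - (M * D * Nᴴ + N * Dᴴ * Mᴴ)).PosSemidef := by
  have hsquare : (μ • (M * Mᴴ) + μ⁻¹ • (N * S * Nᴴ) - (M * D * Nᴴ + N * Dᴴ * Mᴴ)) =
      μ⁻¹ • ((μ • M - N * Dᴴ) * (μ • M - N * Dᴴ)ᴴ + N * (S - Dᴴ * D) * Nᴴ) := by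
    simp only [conjTranspose_sub, conjTranspose_smul, conjTranspose_mul,
      conjTranspose_conjTranspose, star_trivial, Matrix.mul_sub, Matrix.sub_mul, Matrix.smul_mul,
      Matrix.mul_smul, smul_sub, smul_add, smul_smul, inv_mul_cancel₀ hμ.ne', one_smul,
      Matrix.mul_assoc, inv_mul_cancel_left₀ hμ.ne']
    abel
  rw [hsquare]
  exact ((posSemidef_self_mul_conjTranspose _).add (hD.mul_mul_conjTranspose_same N)).smul
    (inv_nonneg.2 hμ.le)

theorem petersen_lemma_strict_general (C : Matrix n n 𝕜) (M : Matrix n p 𝕜) (N : Matrix n q 𝕜)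
    {S : Matrix q q 𝕜} (hS : S.PosSemidef) :
    (∀ D : Matrix p q 𝕜, (S - Dᴴ * D).PosSemidef →
        (-(C + M * D * Nᴴ + N * Dᴴ * Mᴴ)).PosDef) ↔
      ∃ μ : ℝ, 0 < μ ∧ (-(C + μ • (M * Mᴴ) + μ⁻¹ • (N * S * Nᴴ))).PosDef := by
  classical
  constructor
  · intro h
    obtain ⟨B, rfl⟩ := exists_eq_conjTranspose_mul_self hS
    have hcontraction (F : Matrix p q 𝕜) (hF : (1 - Fᴴ * F).PosSemidef) :
        (-(C + M * F * (N * Bᴴ)ᴴ + N * Bᴴ * Fᴴ * Mᴴ)).PosDef := by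
      have hFB : (Bᴴ * B - (F * B)ᴴ * (F * B)).PosSemidef := by
        simpa [Matrix.mul_sub, Matrix.sub_mul, Matrix.mul_assoc] using
          hF.conjTranspose_mul_mul_same B
      simpa [Matrix.mul_assoc] using h (F * B) hFB
    simpa [Matrix.mul_assoc] using exists_posDef_of_forall_contraction hcontraction
  · rintro ⟨μ, hμ, hposDef⟩ D hD
    convert hposDef.add_posSemidef (posSemidef_smul_add_inv_smul_sub hD M N hμ) using 1
    abel

end Matrix

/-- **Petersen's lemma (strict version).**
`𝐂 + 𝐌𝐃𝐍ᵀ + 𝐍𝐃ᵀ𝐌ᵀ ≺ 0` for every `𝐃` with `𝐃ᵀ𝐃 ⪯ 𝐃̄` iff there is `μ > 0` with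
`𝐂 + μ𝐌𝐌ᵀ + μ⁻¹𝐍𝐃̄𝐍ᵀ ≺ 0`. -/
theorem petersen_lemma_strict {n p q : ℕ}
    (C : Matrix (Fin n) (Fin n) ℝ) (M : Matrix (Fin n) (Fin p) ℝ)
    (Dbar : Matrix (Fin q) (Fin q) ℝ) (Nm : Matrix (Fin n) (Fin q) ℝ)
    (hC : C.IsSymm) (hDbar : Dbar.IsSymm) (hDbarPSD : Dbar.PosSemidef) :
    (∀ D : Matrix (Fin p) (Fin q) ℝ, (Dbar - Dᵀ * D).PosSemidef →
        (-(C + M * D * Nmᵀ + Nm * Dᵀ * Mᵀ)).PosDef) ↔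
      (∃ μ : ℝ, 0 < μ ∧
        (-(C + μ • (M * Mᵀ) + μ⁻¹ • (Nm * Dbar * Nmᵀ))).PosDef) := by
  simpa only [conjTranspose_eq_transpose_of_trivial] using
    petersen_lemma_strict_general C M Nm hDbarPSD
end

section
/- Quadratic-form characterization of the set of bilinear systems consistent with noisy data: let Z₀ ∈ ℝ^{N×T}, U₀ ∈ ℝ^{1×T}, V₀ ∈ ℝ^{N×T}, Z₁ ∈ ℝ^{N×T}, Δ ∈ ℝ^{N×N}, let W₀ ∈ ℝ^{(2N+1)×T} be the vertical stack of Z₀, U₀, V₀, and set 𝐀 = W₀W₀ᵀ, 𝐁 = −W₀Z₁ᵀ, 𝐂 = Z₁Z₁ᵀ − ΔΔᵀ. Then for any 𝐙 ∈ ℝ^{(2N+1)×N}, there exists a disturbance matrix D₀ ∈ ℝ^{N×T} with D₀D₀ᵀ ⪯ ΔΔᵀ and Z₁ = 𝐙ᵀW₀ + D₀ if and only if 𝐙ᵀ𝐀𝐙 + 𝐙ᵀ𝐁 + 𝐁ᵀ𝐙 + 𝐂 ⪯ 0. -/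
open Matrix

section StarRing

variable {R m n t : Type*} [Fintype m] [Fintype t]

theorem residual_mul_conjTranspose_residual [NonUnitalRing R] [StarRing R]
    (W : Matrix m t R) (X : Matrix n t R) (Z : Matrix m n R) :
    (X - Zᴴ * W) * (X - Zᴴ * W)ᴴ =
      Zᴴ * (W * Wᴴ) * Z + Zᴴ * -(W * Xᴴ) + (-(W * Xᴴ))ᴴ * Z + X * Xᴴ := by
  simp only [conjTranspose_sub, conjTranspose_mul, conjTranspose_neg,
    conjTranspose_conjTranspose, Matrix.mul_sub, Matrix.sub_mul, Matrix.mul_neg,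
    Matrix.neg_mul, Matrix.mul_assoc]
  abel

theorem consistency_set_quadratic_form_general [Ring R] [PartialOrder R] [StarRing R]
    (W : Matrix m t R) (X : Matrix n t R) (Q : Matrix n n R) (Z : Matrix m n R) :
    (∃ D : Matrix n t R, (Q - D * Dᴴ).PosSemidef ∧ X = Zᴴ * W + D) ↔
      (-(Zᴴ * (W * Wᴴ) * Z + Zᴴ * -(W * Xᴴ) + (-(W * Xᴴ))ᴴ * Z +
        (X * Xᴴ - Q))).PosSemidef := by
  have disturbance_eq_residual (D : Matrix n t R) : X = Zᴴ * W + D ↔ X - Zᴴ * W = D :=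
    sub_eq_iff_eq_add'.symm
  simp only [disturbance_eq_residual, exists_eq_right']
  rw [← add_sub_assoc, ← residual_mul_conjTranspose_residual, neg_sub]

end StarRing

/-- **Quadratic-form characterization of the set of bilinear systems consistent with
noisy data.**  With `W₀` the vertical stack of `Z₀, U₀, V₀`, `𝐀 = W₀W₀ᵀ`,
`𝐁 = −W₀Z₁ᵀ`, `𝐂 = Z₁Z₁ᵀ − ΔΔᵀ`, a matrix `𝐙` admits a disturbance `D₀` with
`D₀D₀ᵀ ⪯ ΔΔᵀ` and `Z₁ = 𝐙ᵀW₀ + D₀` iff `𝐙ᵀ𝐀𝐙 + 𝐙ᵀ𝐁 + 𝐁ᵀ𝐙 + 𝐂 ⪯ 0`. -/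
theorem consistency_set_quadratic_form {N T : ℕ} (hN : 0 < N) (hT : 0 < T)
    (Z₀ : Matrix (Fin N) (Fin T) ℝ) (U₀ : Matrix (Fin 1) (Fin T) ℝ)
    (V₀ : Matrix (Fin N) (Fin T) ℝ) (Z₁ : Matrix (Fin N) (Fin T) ℝ)
    (Δ : Matrix (Fin N) (Fin N) ℝ)
    (W₀ : Matrix (Fin N ⊕ (Fin 1 ⊕ Fin N)) (Fin T) ℝ)
    (hW₀ : W₀ = fromRows Z₀ (fromRows U₀ V₀))
    (mA : Matrix (Fin N ⊕ (Fin 1 ⊕ Fin N)) (Fin N ⊕ (Fin 1 ⊕ Fin N)) ℝ)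
    (hA : mA = W₀ * W₀ᵀ)
    (mB : Matrix (Fin N ⊕ (Fin 1 ⊕ Fin N)) (Fin N) ℝ)
    (hB : mB = -(W₀ * Z₁ᵀ))
    (mC : Matrix (Fin N) (Fin N) ℝ)
    (hC : mC = Z₁ * Z₁ᵀ - Δ * Δᵀ)
    (mZ : Matrix (Fin N ⊕ (Fin 1 ⊕ Fin N)) (Fin N) ℝ) :
    (∃ D₀ : Matrix (Fin N) (Fin T) ℝ,
        (Δ * Δᵀ - D₀ * D₀ᵀ).PosSemidef ∧ Z₁ = mZᵀ * W₀ + D₀) ↔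
      (-(mZᵀ * mA * mZ + mZᵀ * mB + mBᵀ * mZ + mC)).PosSemidef := by
  subst hA hB hC
  simpa only [conjTranspose_eq_transpose_of_trivial] using
    consistency_set_quadratic_form_general W₀ Z₁ (Δ * Δᵀ) mZ
end
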